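/- Let k ≤ n and let X_{i_1,j_1}, …, X_{i_k,j_k} be pairwise distinct indecomposable representations of Q_ε. The set {X_{i_1,j_1}, …, X_{i_k,j_k}} is an exceptional collection if and only if the set of chords d = {{i_1,j_1}, …, {i_k,j_k}} is a strand diagram, i.e. no two chords of d cross and the graph on vertex set {0,…,n} with edge set d is a forest. Consequently, the assignment X_{i,j} ↦ {i,j} induces a bijection from the set of exceptional collections of Q_ε with k elements to the set of strand diagrams with k strands. -/

import Mathlib

namespace ESPaper

/-- Source of arrow `a m` (between vertices `m` and `m+1`): `m` if `ε m = +` (true). -/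
def asrc (ε : ℕ → Bool) (m : ℕ) : ℕ := if ε m then m else m + 1

/-- Target of arrow `a m`. -/
def atgt (ε : ℕ → Bool) (m : ℕ) : ℕ := if ε m then m + 1 else m

/-- A representation of the type `A_n` quiver `Q_ε`: finite dimensional vector spaces at the
vertices `1, …, n` (the spaces at the remaining indices are required to be trivial, so that
the maps attached to indices outside `1, …, n-1` carry no information) together with a
linear map along each arrow `a m : asrc ε m → atgt ε m`, `1 ≤ m ≤ n-1`. -/
structure Rep (K : Type) [Field K] (n : ℕ) (ε : ℕ → Bool) : Type 1 where
  V : ℕ → Type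
  [instAdd : ∀ m, AddCommGroup (V m)]
  [instMod : ∀ m, Module K (V m)]
  [instFin : ∀ m, FiniteDimensional K (V m)]
  triv : ∀ m, m = 0 ∨ n < m → Subsingleton (V m)
  φ : ∀ m, V (asrc ε m) →ₗ[K] V (atgt ε m)

attribute [instance] Rep.instAdd Rep.instMod Rep.instFin

/-- A morphism of representations of `Q_ε`. -/
structure RepHom {K : Type} [Field K] {n : ℕ} {ε : ℕ → Bool} (A B : Rep K n ε) where
  app : ∀ m, A.V m →ₗ[K] B.V m
  comm : ∀ m, (app (atgt ε m)).comp (A.φ m) = (B.φ m).comp (app (asrc ε m))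

/-- Vertex space of the indecomposable `X_{i,j}` (for `0 ≤ i < j ≤ n`): `K` at the
vertices `i+1, …, j` and `0` elsewhere. -/
def XV (K : Type) [Field K] (n i j m : ℕ) : Submodule K K :=
  if i + 1 ≤ m ∧ m ≤ j ∧ m ≤ n then ⊤ else ⊥

/-- Arrow map of the indecomposable `X_{i,j}`: the identity whenever both endpoints of the
arrow lie in the support, and zero otherwise. -/
def Xφ (K : Type) [Field K] (n : ℕ) (ε : ℕ → Bool) (i j m : ℕ) :
    XV K n i j (asrc ε m) →ₗ[K] XV K n i j (atgt ε m) :=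
  if h : i + 1 ≤ atgt ε m ∧ atgt ε m ≤ j ∧ atgt ε m ≤ n then
    LinearMap.codRestrict _ (XV K n i j (asrc ε m)).subtype
      (fun x => by simp [XV, h.1, h.2.1, h.2.2])
  else 0

/-- The indecomposable representation `X_{i,j}` of `Q_ε`. -/
def Xrep (K : Type) [Field K] (n : ℕ) (ε : ℕ → Bool) (i j : ℕ) : Rep K n ε where
  V m := XV K n i j m
  instAdd _ := inferInstance
  instMod _ := inferInstance
  instFin _ := inferInstance
  triv m hm := by
    have hneg : ¬ (i + 1 ≤ m ∧ m ≤ j ∧ m ≤ n) := by omega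
    have hbot : XV K n i j m = ⊥ := by unfold XV; rw [if_neg hneg]
    show Subsingleton (XV K n i j m)
    rw [hbot]
    infer_instance
  φ m := Xφ K n ε i j m

variable {K : Type} [Field K]

/-- `Hom(A, B) = 0`. -/
def homZero {n : ℕ} {ε : ℕ → Bool} (A B : Rep K n ε) : Prop :=
  ∀ θ : RepHom A B, ∀ m, θ.app m = 0

/-- `Hom(A, B) ≠ 0`. -/
def homNonzero {n : ℕ} {ε : ℕ → Bool} (A B : Rep K n ε) : Prop :=
  ∃ θ : RepHom A B, ∃ m, θ.app m ≠ 0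

/-- `0 → B → E → A → 0` is a short exact sequence. -/
def IsSES {n : ℕ} {ε : ℕ → Bool} {B E A : Rep K n ε}
    (f : RepHom B E) (g : RepHom E A) : Prop :=
  (∀ m, Function.Injective (f.app m)) ∧ (∀ m, Function.Surjective (g.app m)) ∧
    (∀ m, LinearMap.range (f.app m) = LinearMap.ker (g.app m))

/-- The short exact sequence `0 → B → E → A → 0` splits. -/
def Splits {n : ℕ} {ε : ℕ → Bool} {E A : Rep K n ε} (g : RepHom E A) : Prop :=
  ∃ s : RepHom A E, ∀ m, (g.app m).comp (s.app m) = LinearMap.id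

/-- `Ext¹(A, B) ≠ 0`: there is a nonsplit short exact sequence `0 → B → E → A → 0`. -/
def extNonzero {n : ℕ} {ε : ℕ → Bool} (A B : Rep K n ε) : Prop :=
  ∃ (E : Rep K n ε) (f : RepHom B E) (g : RepHom E A), IsSES f g ∧ ¬ Splits g

/-- `Ext¹(A, B) = 0`. -/
def extZero {n : ℕ} {ε : ℕ → Bool} (A B : Rep K n ε) : Prop := ¬ extNonzero A B

/-- `(U, V)` is an exceptional pair: `Hom(V,U) = 0` and `Ext¹(V,U) = 0`. -/
def ExcPair {n : ℕ} {ε : ℕ → Bool} (U V : Rep K n ε) : Prop := homZero V U ∧ extZero V U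


/-- The chords `c = {c.1, c.2}` and `d = {d.1, d.2}` (with `c.1 < c.2`, `d.1 < d.2`) cross. -/
def Crosses (ε : ℕ → Bool) (c d : ℕ × ℕ) : Prop :=
  (c.1 < d.1 ∧ d.1 < c.2 ∧ c.2 < d.2 ∧ ε d.1 = ε c.2) ∨
  (d.1 < c.1 ∧ c.1 < d.2 ∧ d.2 < c.2 ∧ ε c.1 = ε d.2) ∨
  (c.1 < d.1 ∧ d.1 < d.2 ∧ d.2 < c.2 ∧ ε d.1 ≠ ε d.2) ∨
  (d.1 < c.1 ∧ c.1 < c.2 ∧ c.2 < d.2 ∧ ε c.1 ≠ ε c.2)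

/-- The chords `c` and `d` share an endpoint. -/
def SharesEndpoint (c d : ℕ × ℕ) : Prop :=
  c.1 = d.1 ∨ c.1 = d.2 ∨ c.2 = d.1 ∨ c.2 = d.2

/-- The chord `c` is clockwise from the chord `d` (chords written with `c.1 < c.2`, `d.1 < d.2`). -/
def Cw (ε : ℕ → Bool) (c d : ℕ × ℕ) : Prop :=
  (c.2 = d.1 ∧ ε c.2 = true) ∨
  (d.2 = c.1 ∧ ε c.1 = false) ∨
  (c.1 = d.1 ∧ ((c.2 < d.2 ∧ ε c.2 = false) ∨ (d.2 < c.2 ∧ ε d.2 = true))) ∨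
  (c.2 = d.2 ∧ ((c.1 < d.1 ∧ ε d.1 = false) ∨ (d.1 < c.1 ∧ ε c.1 = true)))

/-- The graph on `{0,…,n} ⊆ ℕ` determined by a finite set of chords. -/
def chordGraph (d : Finset (ℕ × ℕ)) : SimpleGraph ℕ :=
  SimpleGraph.fromEdgeSet {e : Sym2 ℕ | ∃ c ∈ d, e = s(c.1, c.2)}

/-- The graph on `{0,…,n} ⊆ ℕ` determined by a family of chords. -/
def chordGraphF {k : ℕ} (c : Fin k → ℕ × ℕ) : SimpleGraph ℕ :=
  SimpleGraph.fromEdgeSet {e : Sym2 ℕ | ∃ a : Fin k, e = s((c a).1, (c a).2)}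

/-- `d` is a strand diagram on `S_{n,ε}`: valid pairwise-noncrossing chords forming a forest. -/
def IsDiagram (n : ℕ) (ε : ℕ → Bool) (d : Finset (ℕ × ℕ)) : Prop :=
  (∀ c ∈ d, c.1 < c.2 ∧ c.2 ≤ n) ∧
  (∀ c ∈ d, ∀ c' ∈ d, ¬ Crosses ε c c') ∧
  (chordGraph d).IsAcyclic

/-- The family `c` is a strand diagram (pairwise-noncrossing chords forming a forest). -/
def IsDiagramF {k : ℕ} (ε : ℕ → Bool) (c : Fin k → ℕ × ℕ) : Prop :=
  (∀ a b : Fin k, ¬ Crosses ε (c a) (c b)) ∧ (chordGraphF c).IsAcyclic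

/-- The partial order of the poset `P_d`: `x ≤ y` iff there is a chain of chords of `d`
from `x` to `y` in which each chord shares an endpoint with, and is clockwise from,
the previous one. -/
def leD (ε : ℕ → Bool) (d : Finset (ℕ × ℕ)) : ℕ × ℕ → ℕ × ℕ → Prop :=
  Relation.ReflTransGen (fun x y => x ∈ d ∧ y ∈ d ∧ SharesEndpoint x y ∧ Cw ε y x)

/-- The sequence `(X_{c 0}, …, X_{c (k-1)})` of indecomposables is an exceptional sequence. -/
def IsExcSeq (K : Type) [Field K] (n : ℕ) {k : ℕ} (ε : ℕ → Bool) (c : Fin k → ℕ × ℕ) : Prop :=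
  ∀ a b : Fin k, a < b →
    ExcPair (Xrep K n ε (c a).1 (c a).2) (Xrep K n ε (c b).1 (c b).2)

/-- The set of indecomposables `{X_e : e ∈ d}` is an exceptional collection, i.e. it can be
ordered into an exceptional sequence. -/
def IsExcColl (K : Type) [Field K] (n : ℕ) (ε : ℕ → Bool) (d : Finset (ℕ × ℕ)) : Prop :=
  ∃ c : Fin d.card → ℕ × ℕ, Function.Injective c ∧ (∀ a, c a ∈ d) ∧ IsExcSeq K n ε c

/-!
`Hom(V, U)` and `Ext¹(V, U)` are the kernel and the cokernel of the coboundary map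
`⨁ Hom(V_v, U_v) → ⨁ Hom(V_{source}, U_{target})`, so `(U, V)` is exceptional iff this map is
bijective. For interval modules it is, up to signs, the difference operator from sequences supported
on the common vertices of the two intervals to sequences on the arrows that lead from the support of
`V` to that of `U`. These two index sets differ only at the ends of the overlap, and the map is
bijective iff the Euler form `χ(V, U)` vanishes.

From exceptional to strand diagram: if two chords cross, `χ` is nonzero in both orders. The value
`χ(c, e)` is the difference along `c` of a potential attached to `e`. If it vanishes for all chords
`c` after `e`, that potential is constant on the components they form, while it jumps by
`χ(e, e) = 1` along `e`; so `e` closes no cycle with later chords.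

Conversely, for distinct noncrossing chords, `χ(c, e) ≠ 0` only if `c` is clockwise from `e` at a
common endpoint. At each endpoint some chord has no other chord clockwise from it. A nonempty forest
has fewer chords than endpoints, so one chord has this property at both of its ends; it can be put
first in the sequence, and the remaining chords are ordered by induction.
-/

section Coboundary

variable {n : ℕ} {ε : ℕ → Bool}

/-- The differential `⨁ Hom(A_v, B_v) → ⨁ Hom(A_{source}, B_{target})` whose kernel is `Hom(A, B)`
and whose cokernel is `Ext¹(A, B)`. -/
def coboundary (A B : Rep K n ε) :
    (∀ m, A.V m →ₗ[K] B.V m) →ₗ[K] ∀ m, A.V (asrc ε m) →ₗ[K] B.V (atgt ε m) where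
  toFun t m := B.φ m ∘ₗ t (asrc ε m) - t (atgt ε m) ∘ₗ A.φ m
  map_add' s t := by
    ext m x
    simp only [Pi.add_apply, LinearMap.sub_apply, LinearMap.comp_apply, LinearMap.add_apply,
      map_add]
    abel
  map_smul' r t := by
    ext m x
    simp [smul_sub]

variable {A B : Rep K n ε}

theorem coboundary_apply (t : ∀ m, A.V m →ₗ[K] B.V m) (m : ℕ) :
    coboundary A B t m = B.φ m ∘ₗ t (asrc ε m) - t (atgt ε m) ∘ₗ A.φ m :=
  rfl

theorem homZero_iff_injective_coboundary :
    homZero A B ↔ Function.Injective (coboundary A B) := by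
  rw [injective_iff_map_eq_zero]
  constructor
  · exact fun hzero t ht =>
      funext (hzero ⟨t, fun m => (sub_eq_zero.mp (congrFun ht m)).symm⟩)
  · exact fun hinj θ => congrFun (hinj θ.app (funext fun m => sub_eq_zero.mpr (θ.comm m).symm))

/-- The extension of `A` by `B` with cocycle `δ`: the spaces of `B ⊕ A`, with `δ` added to the
arrow maps. -/
def extensionOf (δ : ∀ m, A.V (asrc ε m) →ₗ[K] B.V (atgt ε m)) : Rep K n ε where
  V m := B.V m × A.V m
  triv m hm :=
    have := B.triv m hm
    have := A.triv m hm
    inferInstance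
  φ m := (B.φ m ∘ₗ LinearMap.fst K _ _ + δ m ∘ₗ LinearMap.snd K _ _).prod
    (A.φ m ∘ₗ LinearMap.snd K _ _)

/-- The inclusion of the subobject of an extension. -/
def extensionInl (δ : ∀ m, A.V (asrc ε m) →ₗ[K] B.V (atgt ε m)) : RepHom B (extensionOf δ) where
  app _ := LinearMap.inl K _ _
  comm m := LinearMap.ext fun x => by
    change (B.φ m x, (0 : A.V (atgt ε m))) = (B.φ m x + δ m 0, A.φ m 0)
    simp only [map_zero, add_zero]

/-- The projection of an extension onto its quotient. -/
def extensionSnd (δ : ∀ m, A.V (asrc ε m) →ₗ[K] B.V (atgt ε m)) : RepHom (extensionOf δ) A where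
  app _ := LinearMap.snd K _ _
  comm _ := rfl

theorem isSES_extensionOf (δ : ∀ m, A.V (asrc ε m) →ₗ[K] B.V (atgt ε m)) :
    IsSES (extensionInl δ) (extensionSnd δ) :=
  ⟨fun _ => LinearMap.inl_injective, fun _ => LinearMap.snd_surjective,
    fun _ => LinearMap.range_inl K _ _⟩

theorem mem_range_coboundary_of_splits {δ : ∀ m, A.V (asrc ε m) →ₗ[K] B.V (atgt ε m)}
    (h : Splits (extensionSnd δ)) : δ ∈ LinearMap.range (coboundary A B) := by
  obtain ⟨s, hs⟩ := h
  have snd_s (m : ℕ) (x : A.V m) : (s.app m x).2 = x := LinearMap.congr_fun (hs m) x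
  refine ⟨fun m => -(LinearMap.fst K (B.V m) (A.V m) ∘ₗ s.app m), ?_⟩
  ext m x
  have hcomm : (s.app (atgt ε m) (A.φ m x)).1 =
      B.φ m (s.app (asrc ε m) x).1 + δ m (s.app (asrc ε m) x).2 :=
    congrArg Prod.fst (LinearMap.congr_fun (s.comm m) x)
  change B.φ m (-(s.app (asrc ε m) x).1) - -(s.app (atgt ε m) (A.φ m x)).1 = δ m x
  rw [hcomm, snd_s, map_neg]
  abel

theorem exists_comp_eq_coboundary_of_isSES {E : Rep K n ε} {f : RepHom B E} {g : RepHom E A}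
    (hfg : IsSES f g) {s : ∀ m, A.V m →ₗ[K] E.V m}
    (hs : ∀ m, g.app m ∘ₗ s m = LinearMap.id) (m : ℕ) :
    ∃ δ : A.V (asrc ε m) →ₗ[K] B.V (atgt ε m),
      f.app (atgt ε m) ∘ₗ δ = coboundary A E s m := by
  obtain ⟨hf, -, hker⟩ := hfg
  have hrange (x : A.V (asrc ε m)) :
      coboundary A E s m x ∈ LinearMap.range (f.app (atgt ε m)) := by
    have hzero : g.app (atgt ε m) ∘ₗ coboundary A E s m = 0 := by
      rw [coboundary_apply, LinearMap.comp_sub, ← LinearMap.comp_assoc, ← LinearMap.comp_assoc,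
        g.comm, LinearMap.comp_assoc, hs, hs, LinearMap.id_comp, LinearMap.comp_id, sub_self]
    rw [hker]
    exact LinearMap.congr_fun hzero x
  exact ⟨LinearMap.codRestrictOfInjective _ _ (hf _) hrange,
    LinearMap.codRestrictOfInjective_comp ..⟩

theorem splits_of_surjective_coboundary (hsurj : Function.Surjective (coboundary A B))
    {E : Rep K n ε} {f : RepHom B E} {g : RepHom E A} (hfg : IsSES f g) : Splits g := by
  choose s hs using fun m => (g.app m).exists_rightInverse_of_surjective
    (LinearMap.range_eq_top.mpr (hfg.2.1 m))
  choose δ hδ using exists_comp_eq_coboundary_of_isSES hfg hs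
  obtain ⟨t, rfl⟩ := hsurj δ
  refine ⟨⟨fun m => s m - f.app m ∘ₗ t m, fun m => ?_⟩, fun m => ?_⟩
  · ext x
    have hδx := LinearMap.congr_fun (hδ m) x
    have fφ := LinearMap.congr_fun (f.comm m) (t (asrc ε m) x)
    simp only [coboundary_apply, LinearMap.comp_apply, LinearMap.sub_apply, map_sub] at hδx fφ ⊢
    linear_combination (norm := module) hδx - fφ
  · rw [LinearMap.comp_sub, hs, ← LinearMap.comp_assoc,
      LinearMap.range_le_ker_iff.mp (hfg.2.2 m).le, LinearMap.zero_comp, sub_zero]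

theorem extZero_iff_surjective_coboundary :
    extZero A B ↔ Function.Surjective (coboundary A B) := by
  constructor
  · intro hext δ
    exact mem_range_coboundary_of_splits
      (by_contra fun hsplit => hext ⟨_, _, _, isSES_extensionOf δ, hsplit⟩)
  · rintro hsurj ⟨E, f, g, hfg, hsplit⟩
    exact hsplit (splits_of_surjective_coboundary hsurj hfg)

theorem excPair_iff_bijective_coboundary {U V : Rep K n ε} :
    ExcPair U V ↔ Function.Bijective (coboundary V U) :=
  and_congr homZero_iff_injective_coboundary extZero_iff_surjective_coboundary

end Coboundary

section Primitives

/-- Every sequence `σ` is, on `S`, the difference sequence of exactly one sequence supported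
on `V`. -/
def HasUniquePrimitives (M : Type*) [AddCommGroup M] (V S : Set ℕ) : Prop :=
  ∀ σ : ℕ → M, ∃! t : ℕ → M, Function.support t ⊆ V ∧ ∀ m ∈ S, t (m + 1) - t m = σ m

variable {M : Type*} [AddCommGroup M] {p q : ℕ}

theorem sub_eq_sum_Ico_of_forall_sub_eq {σ t : ℕ → M} (hpq : p ≤ q)
    (ht : ∀ m ∈ Set.Ico p q, t (m + 1) - t m = σ m) : t q - t p = ∑ m ∈ Finset.Ico p q, σ m := by
  rw [← Finset.sum_Ico_sub t hpq]
  exact Finset.sum_congr rfl fun m hm => ht m (Finset.mem_Ico.mp hm)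

theorem hasUniquePrimitives_Ioc_Ico : HasUniquePrimitives M (Set.Ioc p q) (Set.Ico p q) := by
  refine fun σ => ⟨(Set.Ioc p q).indicator fun m => ∑ i ∈ Finset.Ico p m, σ i,
    ⟨Set.support_indicator_subset, fun m ⟨hpm, hmq⟩ => ?_⟩, fun t ⟨hsupp, ht⟩ => ?_⟩
  · have hsucc : m + 1 ∈ Set.Ioc p q := ⟨Nat.lt_succ_of_le hpm, hmq⟩
    have hm : (Set.Ioc p q).indicator (fun m => ∑ i ∈ Finset.Ico p m, σ i) m =
        ∑ i ∈ Finset.Ico p m, σ i := by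
      rcases hpm.eq_or_lt with rfl | hpm
      · simp
      · exact Set.indicator_of_mem (Set.mem_Ioc.mpr ⟨hpm, hmq.le⟩) _
    rw [hm, Set.indicator_of_mem hsucc, Finset.sum_Ico_succ_top hpm, add_sub_cancel_left]
  · funext m
    by_cases hm : m ∈ Set.Ioc p q
    · have hp : t p = 0 := Function.notMem_support.mp fun h => (hsupp h).1.ne rfl
      rw [Set.indicator_of_mem hm, ← sub_eq_sum_Ico_of_forall_sub_eq hm.1.le
        fun i hi => ht i ⟨hi.1, hi.2.trans_le hm.2⟩, hp, sub_zero]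
    · rw [Set.indicator_of_notMem hm, Function.notMem_support.mp fun h => hm (hsupp h)]

theorem hasUniquePrimitives_Ioc_Ioc : HasUniquePrimitives M (Set.Ioc p q) (Set.Ioc p q) := by
  refine fun σ => ⟨(Set.Ioc p q).indicator fun m => -∑ i ∈ Finset.Ico m (q + 1), σ i,
    ⟨Set.support_indicator_subset, fun m hm => ?_⟩, fun t ⟨hsupp, ht⟩ => ?_⟩
  · have hsucc : (Set.Ioc p q).indicator (fun m => -∑ i ∈ Finset.Ico m (q + 1), σ i) (m + 1) =
        -∑ i ∈ Finset.Ico (m + 1) (q + 1), σ i := by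
      rcases hm.2.eq_or_lt with rfl | hmq
      · simp
      · exact Set.indicator_of_mem (Set.mem_Ioc.mpr ⟨hm.1.trans m.lt_succ_self, hmq⟩) _
    rw [hsucc, Set.indicator_of_mem hm, Finset.sum_eq_sum_Ico_succ_bot (Nat.lt_succ_of_le hm.2)]
    abel
  · funext m
    by_cases hm : m ∈ Set.Ioc p q
    · have hq : t (q + 1) = 0 := Function.notMem_support.mp fun h => by
        have := (hsupp h).2
        omega
      rw [Set.indicator_of_mem hm, ← sub_eq_sum_Ico_of_forall_sub_eq (by have := hm.2; omega)
        fun i hi => ht i ⟨hm.1.trans_le hi.1, by have := hi.2; omega⟩, hq, zero_sub, neg_neg]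
    · rw [Set.indicator_of_notMem hm, Function.notMem_support.mp fun h => hm (hsupp h)]

variable [Nontrivial M]

theorem not_hasUniquePrimitives_Ioc_Ioo (hpq : p < q) :
    ¬ HasUniquePrimitives M (Set.Ioc p q) (Set.Ioo p q) := by
  intro h
  obtain ⟨x, hx⟩ := exists_ne (0 : M)
  have hconst : (Set.Ioc p q).indicator (fun _ => x) = 0 := by
    refine (h 0).unique ⟨Set.support_indicator_subset, fun m ⟨hpm, hmq⟩ => ?_⟩ (by simp)
    have hm : m ∈ Set.Ioc p q := ⟨hpm, hmq.le⟩
    have hsucc : m + 1 ∈ Set.Ioc p q := ⟨hpm.trans m.lt_succ_self, hmq⟩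
    rw [Set.indicator_of_mem hm, Set.indicator_of_mem hsucc, sub_self, Pi.zero_apply]
  exact hx (by simpa [hpq] using congrFun hconst q)

theorem not_hasUniquePrimitives_Ioc_Icc (hpq : p < q) :
    ¬ HasUniquePrimitives M (Set.Ioc p q) (Set.Icc p q) := by
  intro h
  obtain ⟨x, hx⟩ := exists_ne (0 : M)
  obtain ⟨t, ⟨hsupp, ht⟩, -⟩ := h (Pi.single p x)
  have t_eq_zero {m : ℕ} (hm : m ∉ Set.Ioc p q) : t m = 0 :=
    Function.notMem_support.mp fun h => hm (hsupp h)
  have htotal := sub_eq_sum_Ico_of_forall_sub_eq (q := q + 1) (by omega)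
    fun m hm => ht m ⟨hm.1, by have := hm.2; omega⟩
  rw [t_eq_zero (by simp), t_eq_zero (by simp), sub_zero, Finset.sum_pi_single',
    if_pos (Finset.mem_Ico.mpr ⟨le_rfl, by omega⟩)] at htotal
  exact hx htotal.symm

theorem hasUniquePrimitives_Ioc_iff_xor {S : Set ℕ} (hpq : p < q) (hIoo : Set.Ioo p q ⊆ S)
    (hIcc : S ⊆ Set.Icc p q) : HasUniquePrimitives M (Set.Ioc p q) S ↔ Xor (p ∈ S) (q ∈ S) := by
  by_cases hp : p ∈ S <;> by_cases hq : q ∈ S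
  · have hS : S = Set.Icc p q := by grind
    simp [hS, not_hasUniquePrimitives_Ioc_Icc, hpq, hpq.le]
  · have hS : S = Set.Ico p q := by grind
    simp [hS, hasUniquePrimitives_Ioc_Ico, hpq]
  · have hS : S = Set.Ioc p q := by grind
    simp [hS, hasUniquePrimitives_Ioc_Ioc, hpq]
  · have hS : S = Set.Ioo p q := by grind
    simp [hS, not_hasUniquePrimitives_Ioc_Ioo, hpq]

theorem hasUniquePrimitives_empty_iff {S : Set ℕ} : HasUniquePrimitives M ∅ S ↔ S = ∅ := by
  constructor
  · intro h
    obtain ⟨x, hx⟩ := exists_ne (0 : M)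
    obtain ⟨t, ⟨hsupp, ht⟩, -⟩ := h fun _ => x
    rw [Set.subset_empty_iff, Function.support_eq_empty_iff] at hsupp
    subst hsupp
    refine Set.eq_empty_of_forall_notMem fun m hm => hx ?_
    simpa using (ht m hm).symm
  · rintro rfl σ
    exact ⟨0, by simp, fun t ht => by simpa using ht.1⟩

end Primitives

section Coordinates

variable {n : ℕ} {ε : ℕ → Bool} {i j : ℕ}

/-- The tautological embedding of the vertex space of `X_{i,j}` into `K`. -/
def Xrep.val (m : ℕ) : (Xrep K n ε i j).V m →ₗ[K] K :=
  (XV K n i j m).subtype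

/-- The generator of the vertex space of `X_{i,j}`: `1` on the support, `0` off it. -/
def Xrep.gen (m : ℕ) : (Xrep K n ε i j).V m :=
  (⟨if i + 1 ≤ m ∧ m ≤ j ∧ m ≤ n then 1 else 0, by unfold XV; split_ifs <;> simp⟩ : XV K n i j m)

theorem Xrep.val_injective (m : ℕ) :
    Function.Injective (Xrep.val m : (Xrep K n ε i j).V m →ₗ[K] K) :=
  Subtype.val_injective

theorem Xrep.val_eq_zero {m : ℕ} (hm : m ∉ Set.Ioc i j) (x : (Xrep K n ε i j).V m) :
    Xrep.val m x = 0 := by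
  have hbot : XV K n i j m = ⊥ := if_neg fun h => hm ⟨h.1, h.2.1⟩
  exact (Submodule.eq_bot_iff _).mp hbot _ x.2

theorem Xrep.val_gen (hj : j ≤ n) {m : ℕ} (hm : m ∈ Set.Ioc i j) :
    Xrep.val m (Xrep.gen m : (Xrep K n ε i j).V m) = 1 :=
  if_pos ⟨hm.1, hm.2, hm.2.trans hj⟩

theorem Xrep.val_smul_gen (hj : j ≤ n) {m : ℕ} (x : (Xrep K n ε i j).V m) :
    Xrep.val m x • Xrep.gen m = x := by
  apply Xrep.val_injective
  rw [map_smul, smul_eq_mul]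
  by_cases hm : m ∈ Set.Ioc i j
  · rw [Xrep.val_gen hj hm, mul_one]
  · rw [Xrep.val_eq_zero hm x, zero_mul]

theorem Xrep.val_φ (hj : j ≤ n) {m : ℕ} (hm : atgt ε m ∈ Set.Ioc i j)
    (x : (Xrep K n ε i j).V (asrc ε m)) :
    Xrep.val (atgt ε m) ((Xrep K n ε i j).φ m x) = Xrep.val (asrc ε m) x := by
  have hφ : (Xrep K n ε i j).φ m = _ := dif_pos ⟨hm.1, hm.2, hm.2.trans hj⟩
  rw [hφ]
  rfl

theorem Xrep.φ_gen (hj : j ≤ n) {m : ℕ} (hm : asrc ε m ∈ Set.Ioc i j) :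
    (Xrep K n ε i j).φ m (Xrep.gen (asrc ε m)) = Xrep.gen (atgt ε m) := by
  apply Xrep.val_injective
  by_cases htgt : atgt ε m ∈ Set.Ioc i j
  · rw [Xrep.val_φ hj htgt, Xrep.val_gen hj hm, Xrep.val_gen hj htgt]
  · rw [Xrep.val_eq_zero htgt, Xrep.val_eq_zero htgt]

variable {c d : ℕ × ℕ}

/-- The scalar by which a linear map between vertex spaces of `X_c` and `X_d` acts. -/
def coord {m m' : ℕ} (f : (Xrep K n ε c.1 c.2).V m →ₗ[K] (Xrep K n ε d.1 d.2).V m') : K :=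
  Xrep.val m' (f (Xrep.gen m))

theorem coord_injective (hc : c.2 ≤ n) {m m' : ℕ} : Function.Injective
    (coord : ((Xrep K n ε c.1 c.2).V m →ₗ[K] (Xrep K n ε d.1 d.2).V m') → K) := by
  refine fun f g hfg => LinearMap.ext fun x => ?_
  rw [← Xrep.val_smul_gen hc x, map_smul, map_smul, Xrep.val_injective m' hfg]

theorem mem_and_mem_of_coord_ne_zero (hc : c.2 ≤ n) {m m' : ℕ}
    {f : (Xrep K n ε c.1 c.2).V m →ₗ[K] (Xrep K n ε d.1 d.2).V m'} (hf : coord f ≠ 0) :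
    m ∈ Set.Ioc c.1 c.2 ∧ m' ∈ Set.Ioc d.1 d.2 := by
  constructor <;> by_contra h <;> refine hf ?_
  · rw [coord, ← Xrep.val_smul_gen hc (Xrep.gen m), Xrep.val_eq_zero h, zero_smul, map_zero,
      map_zero]
  · exact Xrep.val_eq_zero h _

theorem exists_coord_eq (hc : c.2 ≤ n) (hd : d.2 ≤ n) {m m' : ℕ} {a : K}
    (ha : a ≠ 0 → m ∈ Set.Ioc c.1 c.2 ∧ m' ∈ Set.Ioc d.1 d.2) :
    ∃ f : (Xrep K n ε c.1 c.2).V m →ₗ[K] (Xrep K n ε d.1 d.2).V m', coord f = a := by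
  rcases eq_or_ne a 0 with rfl | ha₀
  · exact ⟨0, by simp [coord]⟩
  · refine ⟨(Xrep.val m).smulRight (a • Xrep.gen m'), ?_⟩
    rw [coord, LinearMap.smulRight_apply, Xrep.val_gen hc (ha ha₀).1, one_smul, map_smul,
      Xrep.val_gen hd (ha ha₀).2, smul_eq_mul, mul_one]

/-- The arrows of `Q_ε` from the support of `X_c` to that of `X_d`. -/
def linkingArrows (ε : ℕ → Bool) (c d : ℕ × ℕ) : Set ℕ :=
  {m | asrc ε m ∈ Set.Ioc c.1 c.2 ∧ atgt ε m ∈ Set.Ioc d.1 d.2}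

theorem coord_coboundary (hc : c.2 ≤ n) (hd : d.2 ≤ n)
    (t : ∀ m, (Xrep K n ε c.1 c.2).V m →ₗ[K] (Xrep K n ε d.1 d.2).V m) {m : ℕ}
    (hm : m ∈ linkingArrows ε c d) :
    coord (coboundary _ _ t m) = coord (t (asrc ε m)) - coord (t (atgt ε m)) := by
  rw [coord, coboundary_apply, LinearMap.sub_apply, LinearMap.comp_apply, LinearMap.comp_apply,
    map_sub, Xrep.val_φ hd hm.2, Xrep.φ_gen hc hm.1, coord, coord]

/-- `1` if the arrow `a_m` points towards `m`, and `-1` if it points towards `m + 1`. -/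
def arrowSign (K : Type) [Field K] (ε : ℕ → Bool) (m : ℕ) : K :=
  if ε m then -1 else 1

theorem asrc_sub_atgt (τ : ℕ → K) (m : ℕ) :
    τ (asrc ε m) - τ (atgt ε m) = arrowSign K ε m * (τ (m + 1) - τ m) := by
  unfold asrc atgt arrowSign
  split_ifs <;> ring

theorem arrowSign_mul_self (m : ℕ) : arrowSign K ε m * arrowSign K ε m = 1 := by
  unfold arrowSign
  split_ifs <;> ring

theorem coboundary_eq_iff (hc : c.2 ≤ n) (hd : d.2 ≤ n)
    (t : ∀ m, (Xrep K n ε c.1 c.2).V m →ₗ[K] (Xrep K n ε d.1 d.2).V m)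
    (δ : ∀ m, (Xrep K n ε c.1 c.2).V (asrc ε m) →ₗ[K] (Xrep K n ε d.1 d.2).V (atgt ε m)) :
    coboundary _ _ t = δ ↔ ∀ m ∈ linkingArrows ε c d,
      coord (t (m + 1)) - coord (t m) = arrowSign K ε m * coord (δ m) := by
  have hcoord (m : ℕ) (hm : m ∈ linkingArrows ε c d) : coord (coboundary _ _ t m) =
      arrowSign K ε m * (coord (t (m + 1)) - coord (t m)) := by
    rw [coord_coboundary hc hd t hm, asrc_sub_atgt fun v => coord (t v)]
  constructor
  · rintro rfl m hm
    rw [hcoord m hm, ← mul_assoc, arrowSign_mul_self, one_mul]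
  · refine fun h => funext fun m => coord_injective hc ?_
    by_cases hm : m ∈ linkingArrows ε c d
    · rw [hcoord m hm, h m hm, ← mul_assoc, arrowSign_mul_self, one_mul]
    · have hzero (f : (Xrep K n ε c.1 c.2).V (asrc ε m) →ₗ[K] (Xrep K n ε d.1 d.2).V (atgt ε m)) :
          coord f = 0 := by_contra fun hf => hm (mem_and_mem_of_coord_ne_zero hc hf)
      rw [hzero, hzero]

theorem exists_forall_coord_eq (hc : c.2 ≤ n) (hd : d.2 ≤ n) {v w : ℕ → ℕ} {τ : ℕ → K}
    (hτ : ∀ m, τ m ≠ 0 → v m ∈ Set.Ioc c.1 c.2 ∧ w m ∈ Set.Ioc d.1 d.2) :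
    ∃ f : ∀ m, (Xrep K n ε c.1 c.2).V (v m) →ₗ[K] (Xrep K n ε d.1 d.2).V (w m),
      (fun m => coord (f m)) = τ := by
  choose f hf using fun m => exists_coord_eq (ε := ε) hc hd (hτ m)
  exact ⟨f, funext hf⟩

theorem hasUniquePrimitives_of_bijective_coboundary (hc : c.2 ≤ n) (hd : d.2 ≤ n)
    (hbij : Function.Bijective (coboundary (Xrep K n ε c.1 c.2) (Xrep K n ε d.1 d.2))) :
    HasUniquePrimitives K (Set.Ioc c.1 c.2 ∩ Set.Ioc d.1 d.2) (linkingArrows ε c d) := by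
  intro σ
  obtain ⟨δ, hδ⟩ := exists_forall_coord_eq (ε := ε) hc hd (v := asrc ε) (w := atgt ε)
    (τ := (linkingArrows ε c d).indicator fun m => arrowSign K ε m * σ m)
    fun m hm => Set.mem_of_indicator_ne_zero (s := linkingArrows ε c d) hm
  have hσ (m : ℕ) (hm : m ∈ linkingArrows ε c d) : arrowSign K ε m * coord (δ m) = σ m := by
    rw [congrFun hδ m, Set.indicator_of_mem hm, ← mul_assoc, arrowSign_mul_self, one_mul]
  obtain ⟨t, ht, ht_unique⟩ := hbij.existsUnique δ
  rw [coboundary_eq_iff hc hd] at ht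
  refine ⟨fun m => coord (t m), ⟨fun m hm => mem_and_mem_of_coord_ne_zero hc hm,
    fun m hm => (ht m hm).trans (hσ m hm)⟩, fun τ ⟨hsupp, hτ⟩ => ?_⟩
  obtain ⟨t', rfl⟩ := exists_forall_coord_eq (ε := ε) hc hd (v := id) (w := id) hsupp
  have ht' : coboundary _ _ t' = δ :=
    (coboundary_eq_iff hc hd t' δ).mpr fun m hm => (hτ m hm).trans (hσ m hm).symm
  rw [ht_unique t' ht']

theorem bijective_coboundary_of_hasUniquePrimitives (hc : c.2 ≤ n) (hd : d.2 ≤ n)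
    (hprim : HasUniquePrimitives K (Set.Ioc c.1 c.2 ∩ Set.Ioc d.1 d.2) (linkingArrows ε c d)) :
    Function.Bijective (coboundary (Xrep K n ε c.1 c.2) (Xrep K n ε d.1 d.2)) := by
  rw [Function.bijective_iff_existsUnique]
  intro δ
  obtain ⟨τ, ⟨hsupp, hτ⟩, hτ_unique⟩ := hprim fun m => arrowSign K ε m * coord (δ m)
  obtain ⟨t, rfl⟩ := exists_forall_coord_eq (ε := ε) hc hd (v := id) (w := id) hsupp
  refine ⟨t, (coboundary_eq_iff hc hd t δ).mpr hτ, fun t' ht' => ?_⟩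
  have hcoord_eq : (fun m => coord (t' m)) = fun m => coord (t m) :=
    hτ_unique _ ⟨fun m hm => mem_and_mem_of_coord_ne_zero hc hm,
      (coboundary_eq_iff hc hd t' δ).mp ht'⟩
  exact funext fun m => coord_injective hc (congrFun hcoord_eq m)

end Coordinates

/-- The Euler form of `X_{-1,a}` and `X_{-1,b}` for `Q_ε` enlarged by a vertex `0` and the arrow
`a_0`: there are `min a b + 1` common vertices, and as many arrows lead from the support of the
first to that of the second, unless `a = b` or the arrow leaving `[0, min a b]` points the wrong
way. -/
def eulerKernel (ε : ℕ → Bool) (a b : ℕ) : ℤ :=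
  if a = b then 1 else if b < a then (if ε b then 1 else 0) else (if ε a then 0 else 1)

/-- The Euler form `dim Hom(X_c, X_d) - dim Ext¹(X_c, X_d)`, expanded bilinearly along
`[X_{i,j}] = [X_{-1,j}] - [X_{-1,i}]`. -/
def eulerForm (ε : ℕ → Bool) (c d : ℕ × ℕ) : ℤ :=
  (eulerKernel ε c.2 d.2 - eulerKernel ε c.2 d.1) - (eulerKernel ε c.1 d.2 - eulerKernel ε c.1 d.1)

section EulerForm

variable {ε : ℕ → Bool} {c d : ℕ × ℕ}

theorem eulerForm_self (hc : c.1 < c.2) : eulerForm ε c c = 1 := by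
  grind [eulerForm, eulerKernel]

theorem eulerForm_ne_zero_of_crosses (h : Crosses ε c d) : eulerForm ε d c ≠ 0 := by
  grind [eulerForm, eulerKernel, Crosses]

theorem not_crosses_self : ¬ Crosses ε c c := by
  grind [Crosses]

theorem Crosses.symm (h : Crosses ε c d) : Crosses ε d c := by
  grind [Crosses]

theorem sharesEndpoint_of_eulerForm_ne_zero (hc : c.1 < c.2) (hd : d.1 < d.2)
    (hcross : ¬ Crosses ε c d) (hχ : eulerForm ε c d ≠ 0) : SharesEndpoint c d := by
  grind (splits := 25) [eulerForm, eulerKernel, Crosses, SharesEndpoint]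

end EulerForm

section ExceptionalPairs

variable {n : ℕ} {ε : ℕ → Bool} {c d : ℕ × ℕ}

theorem mem_linkingArrows_iff {m : ℕ} : m ∈ linkingArrows ε c d ↔
    if ε m then m ∈ Set.Ioc c.1 c.2 ∧ m + 1 ∈ Set.Ioc d.1 d.2
    else m + 1 ∈ Set.Ioc c.1 c.2 ∧ m ∈ Set.Ioc d.1 d.2 := by
  unfold linkingArrows asrc atgt
  split_ifs with h <;> simp [h]

theorem Ioo_subset_linkingArrows :
    Set.Ioo (max c.1 d.1) (min c.2 d.2) ⊆ linkingArrows ε c d := by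
  intro m hm
  grind [mem_linkingArrows_iff]

theorem linkingArrows_subset_Icc :
    linkingArrows ε c d ⊆ Set.Icc (max c.1 d.1) (min c.2 d.2) := by
  intro m hm
  grind [mem_linkingArrows_iff]

theorem eulerForm_of_lt (hcd : max c.1 d.1 < min c.2 d.2) : eulerForm ε c d =
    1 - (linkingArrows ε c d).indicator 1 (max c.1 d.1) -
      (linkingArrows ε c d).indicator 1 (min c.2 d.2) := by
  classical
  simp only [Set.indicator_apply, mem_linkingArrows_iff, Pi.one_apply]
  grind (splits := 30) [eulerForm, eulerKernel]

theorem eulerForm_of_le (hc : c.1 < c.2) (hd : d.1 < d.2) (hdc : min c.2 d.2 ≤ max c.1 d.1) :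
    eulerForm ε c d = -(linkingArrows ε c d).indicator 1 (max c.1 d.1) := by
  classical
  simp only [Set.indicator_apply, mem_linkingArrows_iff, Pi.one_apply]
  grind (splits := 30) [eulerForm, eulerKernel]

theorem eulerForm_eq_zero_iff_xor (hcd : max c.1 d.1 < min c.2 d.2) : eulerForm ε c d = 0 ↔
    Xor (max c.1 d.1 ∈ linkingArrows ε c d) (min c.2 d.2 ∈ linkingArrows ε c d) := by
  by_cases hp : max c.1 d.1 ∈ linkingArrows ε c d <;>
    by_cases hq : min c.2 d.2 ∈ linkingArrows ε c d <;>
    simp [eulerForm_of_lt hcd, hp, hq]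

theorem eulerForm_eq_zero_iff_linkingArrows_eq_empty (hc : c.1 < c.2) (hd : d.1 < d.2)
    (hdc : min c.2 d.2 ≤ max c.1 d.1) : eulerForm ε c d = 0 ↔ linkingArrows ε c d = ∅ := by
  calc eulerForm ε c d = 0 ↔ max c.1 d.1 ∉ linkingArrows ε c d := by
        simp [eulerForm_of_le hc hd hdc]
    _ ↔ linkingArrows ε c d = ∅ := by
        refine ⟨fun h => Set.eq_empty_of_forall_notMem fun m hm => h ?_, fun h => by simp [h]⟩
        obtain ⟨hle, hge⟩ := linkingArrows_subset_Icc hm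
        rwa [le_antisymm hle (hge.trans hdc)]

theorem excPair_Xrep_iff (hc : c.1 < c.2 ∧ c.2 ≤ n) (hd : d.1 < d.2 ∧ d.2 ≤ n) :
    ExcPair (Xrep K n ε c.1 c.2) (Xrep K n ε d.1 d.2) ↔ eulerForm ε d c = 0 := by
  calc ExcPair (Xrep K n ε c.1 c.2) (Xrep K n ε d.1 d.2)
      ↔ HasUniquePrimitives K (Set.Ioc (max d.1 c.1) (min d.2 c.2)) (linkingArrows ε d c) := by
        rw [excPair_iff_bijective_coboundary, ← Set.Ioc_inter_Ioc]
        exact ⟨hasUniquePrimitives_of_bijective_coboundary hd.2 hc.2,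
          bijective_coboundary_of_hasUniquePrimitives hd.2 hc.2⟩
    _ ↔ eulerForm ε d c = 0 := by
        rcases lt_or_ge (max d.1 c.1) (min d.2 c.2) with hlt | hle
        · rw [eulerForm_eq_zero_iff_xor hlt, hasUniquePrimitives_Ioc_iff_xor hlt
            Ioo_subset_linkingArrows linkingArrows_subset_Icc]
        · rw [eulerForm_eq_zero_iff_linkingArrows_eq_empty hd.1 hc.1 hle,
            Set.Ioc_eq_empty hle.not_gt, hasUniquePrimitives_empty_iff]

end ExceptionalPairs

section Cw

variable {ε : ℕ → Bool} {c d e : ℕ × ℕ}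

theorem Cw.irrefl (hc : c.1 < c.2) : ¬ Cw ε c c := by
  grind [Cw]

theorem Cw.trans_of_common_endpoint {v : ℕ} (hc : c.1 < c.2) (hd : d.1 < d.2) (he : e.1 < e.2)
    (hvc : v = c.1 ∨ v = c.2) (hvd : v = d.1 ∨ v = d.2) (hve : v = e.1 ∨ v = e.2)
    (hcd : Cw ε c d) (hde : Cw ε d e) : Cw ε c e := by
  rcases hvc with rfl | rfl <;> rcases hvd with hvd | hvd <;> rcases hve with hve | hve <;>
    grind (splits := 25) [Cw]

theorem cw_of_eulerForm_ne_zero (hc : c.1 < c.2) (hd : d.1 < d.2) (hne : c ≠ d)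
    (hshare : SharesEndpoint c d) (hχ : eulerForm ε c d ≠ 0) : Cw ε c d := by
  grind (splits := 25) [eulerForm, eulerKernel, SharesEndpoint, Cw, Prod.ext_iff]

end Cw

section ChordGraph

variable {d : Finset (ℕ × ℕ)}

theorem chordGraph_adj {u v : ℕ} :
    (chordGraph d).Adj u v ↔ ((u, v) ∈ d ∨ (v, u) ∈ d) ∧ u ≠ v := by
  simp only [chordGraph, SimpleGraph.fromEdgeSet_adj, Set.mem_ofPred_eq, Sym2.eq_iff]
  grind

theorem chordGraph_mono {d' : Finset (ℕ × ℕ)} (h : d ⊆ d') : chordGraph d ≤ chordGraph d' :=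
  SimpleGraph.fromEdgeSet_mono fun _ ⟨c, hc, hce⟩ => ⟨c, h hc, hce⟩

theorem chordGraph_insert (e : ℕ × ℕ) :
    chordGraph (insert e d) = chordGraph d ⊔ SimpleGraph.edge e.1 e.2 := by
  ext u v
  simp only [SimpleGraph.sup_adj, chordGraph_adj, SimpleGraph.edge_adj, Finset.mem_insert,
    Prod.ext_iff]
  tauto

end ChordGraph

section Forests

theorem card_edgeSet_lt_card_of_isAcyclic {V : Type*} [Finite V] [Nonempty V] {G : SimpleGraph V}
    (hG : G.IsAcyclic) : Nat.card G.edgeSet < Nat.card V := by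
  obtain ⟨T, hGT, -, hT⟩ := SimpleGraph.connected_top.exists_isTree_le_of_le_of_isAcyclic le_top hG
  calc Nat.card G.edgeSet ≤ Nat.card T.edgeSet :=
        Nat.card_mono (Set.toFinite _) (SimpleGraph.edgeSet_mono hGT)
    _ < Nat.card V := by
        have := (SimpleGraph.isTree_iff_connected_and_card.mp hT).2
        omega

/-- The vertices on which some chord of `d` ends. -/
def endpoints (d : Finset (ℕ × ℕ)) : Finset ℕ :=
  d.image Prod.fst ∪ d.image Prod.snd

theorem mem_endpoints {d : Finset (ℕ × ℕ)} {v : ℕ} :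
    v ∈ endpoints d ↔ ∃ c ∈ d, v = c.1 ∨ v = c.2 := by
  simp only [endpoints, Finset.mem_union, Finset.mem_image]
  grind

theorem card_lt_card_endpoints_of_isAcyclic {d : Finset (ℕ × ℕ)} (hd : ∀ c ∈ d, c.1 < c.2)
    (hne : d.Nonempty) (hG : (chordGraph d).IsAcyclic) : d.card < (endpoints d).card := by
  obtain ⟨c₀, hc₀⟩ := hne
  have : Nonempty (endpoints d) := ⟨c₀.1, mem_endpoints.mpr ⟨c₀, hc₀, .inl rfl⟩⟩
  let edgeOf (c : d) : ((chordGraph d).induce (endpoints d)).edgeSet :=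
    ⟨s(⟨c.1.1, mem_endpoints.mpr ⟨c, c.2, .inl rfl⟩⟩,
        ⟨c.1.2, mem_endpoints.mpr ⟨c, c.2, .inr rfl⟩⟩),
      chordGraph_adj.mpr ⟨.inl c.2, (hd c c.2).ne⟩⟩
  have edgeOf_injective : Function.Injective edgeOf := by
    rintro ⟨c, hc⟩ ⟨e, he⟩ hce
    have hends := Sym2.eq_iff.mp (congrArg Subtype.val hce)
    simp only [Subtype.mk.injEq] at hends ⊢
    grind
  calc d.card = Nat.card d := by simp
    _ ≤ Nat.card ((chordGraph d).induce (endpoints d)).edgeSet :=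
        Nat.card_le_card_of_injective edgeOf edgeOf_injective
    _ < Nat.card (endpoints d) := card_edgeSet_lt_card_of_isAcyclic (hG.induce _)
    _ = (endpoints d).card := by simp

end Forests

section Sequences

variable {ε : ℕ → Bool} {d : Finset (ℕ × ℕ)}

theorem not_reachable_of_forall_eulerForm_eq_zero {e : ℕ × ℕ} (he : e.1 < e.2)
    (hd : ∀ c ∈ d, eulerForm ε c e = 0) : ¬ (chordGraph d).Reachable e.1 e.2 := by
  let h (v : ℕ) : ℤ := eulerKernel ε v e.2 - eulerKernel ε v e.1
  have h_const {u v : ℕ} (huv : (chordGraph d).Reachable u v) : h u = h v := by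
    obtain ⟨w⟩ := huv
    induction w with
    | nil => rfl
    | cons hadj _ ih =>
      rw [← ih]
      rcases (chordGraph_adj.mp hadj).1 with hmem | hmem
      · exact (sub_eq_zero.mp (hd _ hmem)).symm
      · exact sub_eq_zero.mp (hd _ hmem)
  intro hreach
  have hself : h e.2 - h e.1 = 1 := eulerForm_self he
  rw [h_const hreach, sub_self] at hself
  exact zero_ne_one hself

theorem isAcyclic_chordGraph_of_pairwise_eulerForm_eq_zero {l : List (ℕ × ℕ)}
    (hl : ∀ c ∈ l, c.1 < c.2) (hχ : l.Pairwise fun c e => eulerForm ε e c = 0) :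
    (chordGraph l.toFinset).IsAcyclic := by
  induction l with
  | nil => simp [chordGraph]
  | cons e l ih =>
    rw [List.pairwise_cons] at hχ
    rw [List.forall_mem_cons] at hl
    rw [List.toFinset_cons, chordGraph_insert]
    refine (ih hl.2 hχ.2).sup_edge_of_not_reachable
      (not_reachable_of_forall_eulerForm_eq_zero (ε := ε) hl.1 ?_)
    simpa using hχ.1

theorem exists_cw_minimal_at_endpoint {v : ℕ} (hd : ∀ c ∈ d, c.1 < c.2) (hv : v ∈ endpoints d) :
    ∃ e ∈ d, (v = e.1 ∨ v = e.2) ∧ ∀ c ∈ d, v = c.1 ∨ v = c.2 → ¬ Cw ε c e := by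
  let Chord := {c : d // v = c.1.1 ∨ v = c.1.2}
  let cw (c e : Chord) : Prop := Cw ε c.1 e.1
  have : Std.Irrefl cw := ⟨fun c => Cw.irrefl (hd c.1 c.1.2)⟩
  have : IsTrans Chord cw := ⟨fun a b c => Cw.trans_of_common_endpoint (hd a.1 a.1.2)
    (hd b.1 b.1.2) (hd c.1 c.1.2) a.2 b.2 c.2⟩
  obtain ⟨c, hc, hvc⟩ := mem_endpoints.mp hv
  obtain ⟨⟨⟨e, he⟩, hve⟩, -, hmin⟩ :=
    (Finite.wellFounded_of_trans_of_irrefl cw).has_min Set.univ ⟨⟨⟨c, hc⟩, hvc⟩, trivial⟩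
  exact ⟨e, he, hve, fun c hc hvc => hmin ⟨⟨c, hc⟩, hvc⟩ trivial⟩

theorem exists_forall_eulerForm_eq_zero (hd : ∀ c ∈ d, c.1 < c.2) (hne : d.Nonempty)
    (hcross : ∀ c ∈ d, ∀ c' ∈ d, ¬ Crosses ε c c') (hG : (chordGraph d).IsAcyclic) :
    ∃ e ∈ d, ∀ c ∈ d, c ≠ e → eulerForm ε c e = 0 := by
  have hmin (v : ℕ) (hv : v ∈ endpoints d) := exists_cw_minimal_at_endpoint (ε := ε) hd hv
  choose! μ μ_mem μ_end μ_min using hmin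
  obtain ⟨v, hv, w, hw, hvw, hμ⟩ := Finset.exists_ne_map_eq_of_card_lt_of_maps_to
    (card_lt_card_endpoints_of_isAcyclic hd hne hG) μ_mem
  refine ⟨μ v, μ_mem v hv, fun c hc hcμ => by_contra fun hχ => ?_⟩
  have hshare := sharesEndpoint_of_eulerForm_ne_zero (hd c hc) (hd _ (μ_mem v hv))
    (hcross c hc _ (μ_mem v hv)) hχ
  have hcw : Cw ε c (μ v) := cw_of_eulerForm_ne_zero (hd c hc) (hd _ (μ_mem v hv)) hcμ hshare hχ
  have hends : (v = c.1 ∨ v = c.2) ∨ (w = c.1 ∨ w = c.2) := by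
    have := μ_end v hv
    have := μ_end w hw
    grind [SharesEndpoint]
  rcases hends with hvc | hwc
  · exact μ_min v hv c hc hvc hcw
  · exact μ_min w hw c hc hwc (hμ ▸ hcw)

theorem exists_pairwise_eulerForm_eq_zero (hd : ∀ c ∈ d, c.1 < c.2)
    (hcross : ∀ c ∈ d, ∀ c' ∈ d, ¬ Crosses ε c c') (hG : (chordGraph d).IsAcyclic) :
    ∃ l : List (ℕ × ℕ), l.Nodup ∧ l.toFinset = d ∧ l.Pairwise fun c e => eulerForm ε e c = 0 := by
  induction d using Finset.strongInduction with
  | H d ih =>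
    rcases d.eq_empty_or_nonempty with rfl | hne
    · exact ⟨[], by simp⟩
    obtain ⟨e, he, hχ⟩ := exists_forall_eulerForm_eq_zero hd hne hcross hG
    have hsub := d.erase_subset e
    obtain ⟨l, hnodup, hld, hl⟩ := ih _ (Finset.erase_ssubset he) (fun c hc => hd c (hsub hc))
      (fun c hc c' hc' => hcross c (hsub hc) c' (hsub hc')) (hG.anti (chordGraph_mono hsub))
    have hmem {c : ℕ × ℕ} : c ∈ l ↔ c ≠ e ∧ c ∈ d := by
      rw [← List.mem_toFinset, hld, Finset.mem_erase]
    refine ⟨e :: l, hnodup.cons fun hel => (hmem.mp hel).1 rfl, ?_, hl.cons fun c hc => ?_⟩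
    · rw [List.toFinset_cons, hld, Finset.insert_erase he]
    · exact hχ c (hmem.mp hc).2 (hmem.mp hc).1

end Sequences

section Collections

variable {n : ℕ} {ε : ℕ → Bool} {d : Finset (ℕ × ℕ)}

theorem isExcColl_iff_exists_list (hd : ∀ c ∈ d, c.1 < c.2 ∧ c.2 ≤ n) : IsExcColl K n ε d ↔
    ∃ l : List (ℕ × ℕ), l.Nodup ∧ l.toFinset = d ∧ l.Pairwise fun c e => eulerForm ε e c = 0 := by
  constructor
  · rintro ⟨c, hinj, hmem, hseq⟩
    refine ⟨List.ofFn c, List.nodup_ofFn.mpr hinj, ?_, List.pairwise_ofFn.mpr fun a b hab =>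
      (excPair_Xrep_iff (hd _ (hmem a)) (hd _ (hmem b))).mp (hseq a b hab)⟩
    apply Finset.eq_of_subset_of_card_le
    · intro x hx
      obtain ⟨a, rfl⟩ := (List.mem_ofFn ..).mp (List.mem_toFinset.mp hx)
      exact hmem a
    · rw [List.toFinset_card_of_nodup (List.nodup_ofFn.mpr hinj), List.length_ofFn]
  · rintro ⟨l, hnodup, rfl, hχ⟩
    have hcard : l.toFinset.card = l.length := List.toFinset_card_of_nodup hnodup
    have hmem (a : Fin l.toFinset.card) : l.get (a.cast hcard) ∈ l.toFinset :=
      List.mem_toFinset.mpr (l.get_mem _)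
    refine ⟨fun a => l.get (a.cast hcard), ?_, hmem, fun a b hab => ?_⟩
    · exact (List.nodup_iff_injective_get.mp hnodup).comp (Fin.cast_injective hcard)
    · exact (excPair_Xrep_iff (hd _ (hmem a)) (hd _ (hmem b))).mpr
        (List.pairwise_iff_get.mp hχ _ _ hab)

theorem not_crosses_of_pairwise_eulerForm_eq_zero {l : List (ℕ × ℕ)}
    (hχ : l.Pairwise fun c e => eulerForm ε e c = 0) :
    ∀ c ∈ l, ∀ c' ∈ l, ¬ Crosses ε c c' := by
  have hcross : l.Pairwise fun c e => ¬ Crosses ε c e :=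
    hχ.imp fun h hce => eulerForm_ne_zero_of_crosses hce h
  have : Std.Symm fun c e => ¬ Crosses ε c e := ⟨fun _ _ h hec => h hec.symm⟩
  exact fun c hc c' hc' => hcross.forall_of_forall (fun _ _ => not_crosses_self) hc hc'

theorem isExcColl_iff (hd : ∀ c ∈ d, c.1 < c.2 ∧ c.2 ≤ n) : IsExcColl K n ε d ↔
    (∀ c ∈ d, ∀ c' ∈ d, ¬ Crosses ε c c') ∧ (chordGraph d).IsAcyclic := by
  rw [isExcColl_iff_exists_list hd]
  constructor
  · rintro ⟨l, -, rfl, hχ⟩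
    simp only [List.mem_toFinset] at hd ⊢
    exact ⟨not_crosses_of_pairwise_eulerForm_eq_zero hχ,
      isAcyclic_chordGraph_of_pairwise_eulerForm_eq_zero (fun c hc => (hd c hc).1) hχ⟩
  · rintro ⟨hcross, hacyclic⟩
    exact exists_pairwise_eulerForm_eq_zero (fun c hc => (hd c hc).1) hcross hacyclic

end Collections

/-- Theorem 3.6: a set of pairwise distinct indecomposables is an exceptional collection iff
the corresponding set of chords is a strand diagram; consequently `X_{i,j} ↦ {i,j}` induces a
bijection from exceptional collections with `k` elements to strand diagrams with `k` strands. -/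
theorem exceptional_collections_are_strand_diagrams (K : Type) [Field K]
    (n k : ℕ) (ε : ℕ → Bool) (hk : k ≤ n) :
    (∀ d : Finset (ℕ × ℕ), d.card = k → (∀ c ∈ d, c.1 < c.2 ∧ c.2 ≤ n) →
      (IsExcColl K n ε d ↔
        ((∀ c ∈ d, ∀ c' ∈ d, ¬ Crosses ε c c') ∧ (chordGraph d).IsAcyclic))) ∧
    {d : Finset (ℕ × ℕ) | d.card = k ∧ (∀ c ∈ d, c.1 < c.2 ∧ c.2 ≤ n) ∧ IsExcColl K n ε d} =
      {d : Finset (ℕ × ℕ) | d.card = k ∧ IsDiagram n ε d} := by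
  refine ⟨fun d _ hd => isExcColl_iff hd, Set.ext fun d => ?_⟩
  exact and_congr_right fun _ => and_congr_right fun hd => isExcColl_iff hd

end ESPaper
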